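/- arXiv:2309.10124 — 4 statements merged into one kernel-verified Lean document; each statement's English description precedes it below -/
import Mathlib

section
/- Let H be a real Hilbert space, f : H → ℝ ∪ {+∞} a proper convex lower semicontinuous function, S : H → H a continuous linear bijection with continuous inverse, S* its adjoint, and M := S S* (so M is positive definite and invertible). Define Prox_{fS}(v) as the unique minimizer of z ↦ f(S z) + (1/2)‖z − v‖², and Prox_{Mf}(v) as the unique minimizer of z ↦ f(z) + (1/2)⟨z − v, M⁻¹(z − v)⟩. Then for every v ∈ H: Prox_{fS}(v) = S⁻¹ Prox_{Mf}(S v) and Prox_{Mf}(v) = S Prox_{fS}(S⁻¹ v). -/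
open scoped RealInnerProductSpace

theorem prox_unique_aux {H : Type*} [NormedAddCommGroup H] [InnerProductSpace ℝ H]
    (g : H → EReal)
    (hconv : ∀ x y : H, ∀ t : ℝ, 0 ≤ t → t ≤ 1 →
      g (t • x + (1 - t) • y) ≤ ((t : ℝ) : EReal) * g x + (((1 - t : ℝ)) : EReal) * g y)
    (hproper : ∃ x, g x ≠ ⊤) (hnobot : ∀ x, g x ≠ ⊥) (v a b : H)
    (ha : ∀ z, g a + (((1 : ℝ) / 2 * ‖a - v‖ ^ 2 : ℝ) : EReal) ≤
        g z + (((1 : ℝ) / 2 * ‖z - v‖ ^ 2 : ℝ) : EReal))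
    (hb : ∀ z, g b + (((1 : ℝ) / 2 * ‖b - v‖ ^ 2 : ℝ) : EReal) ≤
        g z + (((1 : ℝ) / 2 * ‖z - v‖ ^ 2 : ℝ) : EReal)) : a = b := by
  have key : ∀ c : H, (∀ z, g c + (((1 : ℝ) / 2 * ‖c - v‖ ^ 2 : ℝ) : EReal) ≤
        g z + (((1 : ℝ) / 2 * ‖z - v‖ ^ 2 : ℝ) : EReal)) → ∃ r : ℝ, g c = (r : EReal) := by
    intro c hc
    obtain ⟨x, hx⟩ := hproper
    have h := hc x
    have hct : g c ≠ ⊤ := by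
      intro hct
      rw [hct, EReal.top_add_coe, top_le_iff] at h
      exact EReal.add_ne_top hx (EReal.coe_ne_top _) h
    exact ⟨(g c).toReal, (EReal.coe_toReal hct (hnobot c)).symm⟩
  obtain ⟨α, hα⟩ := key a ha
  obtain ⟨β, hβ⟩ := key b hb
  have hm := hconv a b (1/2) (by norm_num) (by norm_num)
  set m : H := (1/2 : ℝ) • a + (1 - 1/2 : ℝ) • b with hmdef
  rw [hα, hβ] at hm
  have hmt : g m ≠ ⊤ := by
    intro h
    rw [h, top_le_iff] at hm
    norm_cast at hm
    exact EReal.coe_ne_top _ hm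
  obtain ⟨μ, hμ⟩ : ∃ r : ℝ, g m = (r : EReal) :=
    ⟨(g m).toReal, (EReal.coe_toReal hmt (hnobot m)).symm⟩
  have h1 := ha m
  have h2 := hb m
  rw [hα, hμ] at h1
  rw [hβ, hμ] at h2
  rw [hμ] at hm
  rw [← EReal.coe_add, ← EReal.coe_add, EReal.coe_le_coe_iff] at h1 h2
  rw [← EReal.coe_mul, ← EReal.coe_mul, ← EReal.coe_add, EReal.coe_le_coe_iff] at hm
  have hp := parallelogram_law_with_norm ℝ (a - v) (b - v)
  have e1 : (a - v) + (b - v) = (2 : ℝ) • (m - v) := by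
    rw [hmdef]; module
  have e2 : (a - v) - (b - v) = a - b := by abel
  rw [e1, e2, norm_smul, Real.norm_ofNat] at hp
  have h0 : ‖a - b‖ ^ 2 ≤ 0 := by nlinarith
  have h00 : ‖a - b‖ = 0 := by
    have := sq_nonneg ‖a - b‖
    exact pow_eq_zero_iff (two_ne_zero) |>.1 (le_antisymm h0 this)
  exact sub_eq_zero.1 (norm_eq_zero.1 h00)

/-- operator-parameter translation rule. With `S : H ≃L[ℝ] H`, `S*` its adjoint,
`M = S S*` (invertible with inverse `Minv`), `P v` the (unique) minimizer of
`z ↦ f(S z) + (1/2)‖z − v‖²` (i.e. `Prox_{fS}`), and `Q v` the (unique) minimizer of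
`z ↦ f(z) + (1/2)⟨z − v, M⁻¹(z − v)⟩` (i.e. `Prox_{Mf}`), for every `v` we have
`Prox_{fS}(v) = S⁻¹ Prox_{Mf}(S v)` and `Prox_{Mf}(v) = S Prox_{fS}(S⁻¹ v)`. -/
theorem stmt_4 {H : Type*} [NormedAddCommGroup H] [InnerProductSpace ℝ H] [CompleteSpace H]
    (f : H → EReal)
    (hconv : ∀ x y : H, ∀ t : ℝ, 0 ≤ t → t ≤ 1 →
      f (t • x + (1 - t) • y) ≤ ((t : ℝ) : EReal) * f x + (((1 - t : ℝ)) : EReal) * f y)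
    (hlsc : LowerSemicontinuous f)
    (hproper : ∃ x, f x ≠ ⊤) (hnobot : ∀ x, f x ≠ ⊥)
    (S : H ≃L[ℝ] H) (M Minv : H →L[ℝ] H)
    (hM : M = (S : H →L[ℝ] H) ∘L ContinuousLinearMap.adjoint (S : H →L[ℝ] H))
    (hMinv : ∀ w : H, M (Minv w) = w ∧ Minv (M w) = w)
    (P Q : H → H)
    (hP : ∀ v z : H, f (S (P v)) + (((1 : ℝ) / 2 * ‖P v - v‖ ^ 2 : ℝ) : EReal) ≤
        f (S z) + (((1 : ℝ) / 2 * ‖z - v‖ ^ 2 : ℝ) : EReal))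
    (hQ : ∀ v z : H,
        f (Q v) + (((1 : ℝ) / 2 * ⟪Q v - v, Minv (Q v - v)⟫ : ℝ) : EReal) ≤
        f z + (((1 : ℝ) / 2 * ⟪z - v, Minv (z - v)⟫ : ℝ) : EReal)) :
    ∀ v : H, P v = S.symm (Q (S v)) ∧ Q v = S (P (S.symm v)) := by
  have hid : ∀ w : H, ⟪S w, Minv (S w)⟫ = ‖w‖ ^ 2 := by
    intro w
    have h := (hMinv (S w)).1
    rw [hM] at h
    have h' : ContinuousLinearMap.adjoint (S : H →L[ℝ] H) (Minv (S w)) = w :=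
      S.injective (by simpa using h)
    have h3 := ContinuousLinearMap.adjoint_inner_right (S : H →L[ℝ] H) w (Minv (S w))
    rw [h', real_inner_self_eq_norm_sq] at h3
    exact h3.symm
  have main : ∀ v : H, P v = S.symm (Q (S v)) := by
    intro v
    refine prox_unique_aux (fun z => f (S z)) ?_ ?_ (fun x => hnobot _) v _ _ (hP v) ?_
    · intro x y t h0 h1
      simpa using hconv (S x) (S y) t h0 h1
    · obtain ⟨x, hx⟩ := hproper
      exact ⟨S.symm x, by simpa using hx⟩
    · intro z
      have h := hQ (S v) (S z)
      have e : Q (S v) = S (S.symm (Q (S v))) := by simp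
      rw [e, ← map_sub, ← map_sub, hid, hid] at h
      exact h
  intro v
  refine ⟨main v, ?_⟩
  rw [main]
  simp
end

section
/- Let H be a real Hilbert space, f : H → ℝ ∪ {+∞} a proper convex lower semicontinuous function with Fenchel conjugate f*(y) := sup_x (⟨x, y⟩ − f(x)), ρ a nonzero real number, and v ∈ H. Let p be the unique minimizer of z ↦ f(ρ z) + (1/2)‖z − v‖² and q the unique minimizer of z ↦ f*(z/ρ) + (1/2)‖z − v‖². Then p + q = v (the simplified Moreau decomposition v = Prox_{fρ}(v) + Prox_{f*(1/ρ)}(v)). -/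
open scoped RealInnerProductSpace

/-- simplified Moreau decomposition `v = Prox_{fρ}(v) + Prox_{f*(1/ρ)}(v)`.
Here `f : H → ℝ ∪ {+∞}` is CCP with Fenchel conjugate `f*(y) = sup_x (⟨x,y⟩ − f(x))`,
`ρ ≠ 0`, `p` is the (unique) minimizer of `z ↦ f(ρ z) + (1/2)‖z − v‖²` and `q` is the
(unique) minimizer of `z ↦ f*(z/ρ) + (1/2)‖z − v‖²`; then `p + q = v`. -/
theorem stmt_7 {H : Type*} [NormedAddCommGroup H] [InnerProductSpace ℝ H] [CompleteSpace H]
    (f : H → EReal)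
    (hconv : ∀ x y : H, ∀ t : ℝ, 0 ≤ t → t ≤ 1 →
      f (t • x + (1 - t) • y) ≤ ((t : ℝ) : EReal) * f x + (((1 - t : ℝ)) : EReal) * f y)
    (hlsc : LowerSemicontinuous f)
    (hproper : ∃ x, f x ≠ ⊤) (hnobot : ∀ x, f x ≠ ⊥)
    (fstar : H → EReal)
    (hfstar : ∀ y : H, fstar y = ⨆ x : H, ((⟪x, y⟫ : ℝ) : EReal) - f x)
    (ρ : ℝ) (hρ : ρ ≠ 0) (v : H) (p q : H)
    (hp : ∀ z : H, f (ρ • p) + (((1 : ℝ) / 2 * ‖p - v‖ ^ 2 : ℝ) : EReal) ≤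
        f (ρ • z) + (((1 : ℝ) / 2 * ‖z - v‖ ^ 2 : ℝ) : EReal))
    (hq : ∀ z : H, fstar (ρ⁻¹ • q) + (((1 : ℝ) / 2 * ‖q - v‖ ^ 2 : ℝ) : EReal) ≤
        fstar (ρ⁻¹ • z) + (((1 : ℝ) / 2 * ‖z - v‖ ^ 2 : ℝ) : EReal)) :
    p + q = v := by
  -- `f (ρ p)` is finite
  have hptop : f (ρ • p) ≠ ⊤ := by
    intro h
    obtain ⟨x, hx⟩ := hproper
    have h1 := hp (ρ⁻¹ • x)
    rw [smul_inv_smul₀ hρ, h, EReal.top_add_coe] at h1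
    lift f x to ℝ using ⟨hx, hnobot x⟩ with c hc
    rw [← EReal.coe_add] at h1
    exact absurd (top_le_iff.mp h1) (EReal.coe_ne_top _)
  obtain ⟨a, ha⟩ : ∃ a : ℝ, f (ρ • p) = (a : EReal) :=
    ⟨(f (ρ • p)).toReal, (EReal.coe_toReal hptop (hnobot _)).symm⟩
  -- the subgradient inequality
  have hsub : ∀ z : H, ∀ c : ℝ, f (ρ • z) = (c : EReal) → a + ⟪v - p, z - p⟫ ≤ c := by
    intro z c hc
    have key : ∀ t : ℝ, 0 < t → t ≤ 1 →
        a + ⟪v - p, z - p⟫ ≤ c + t * (1 / 2 * ‖z - p‖ ^ 2) := by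
      intro t ht ht1
      have h1 := hconv (ρ • z) (ρ • p) t ht.le ht1
      have h2 := hp (p + t • (z - p))
      have e1 : t • ρ • z + (1 - t) • ρ • p = ρ • (p + t • (z - p)) := by module
      rw [e1, hc, ha, ← EReal.coe_mul, ← EReal.coe_mul, ← EReal.coe_add] at h1
      have h3 := h2.trans (add_le_add_left h1 _)
      rw [ha, ← EReal.coe_add, ← EReal.coe_add, EReal.coe_le_coe_iff] at h3
      have e2 : p + t • (z - p) - v = t • (z - p) - (v - p) := by module
      have e3 : ‖p - v‖ = ‖v - p‖ := norm_sub_rev _ _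
      rw [e2, e3, norm_sub_sq_real (t • (z - p)), real_inner_smul_left, norm_smul, mul_pow,
        Real.norm_eq_abs, sq_abs, real_inner_comm] at h3
      have h4 : t * (a + ⟪v - p, z - p⟫) ≤ t * (c + t * (1 / 2 * ‖z - p‖ ^ 2)) := by
        nlinarith
      exact le_of_mul_le_mul_left h4 ht
    have hlim : Filter.Tendsto (fun t : ℝ => c + t * (1 / 2 * ‖z - p‖ ^ 2))
        (nhdsWithin 0 (Set.Ioi 0)) (nhds c) := by
      have : Continuous (fun t : ℝ => c + t * (1 / 2 * ‖z - p‖ ^ 2)) := by fun_prop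
      have h := this.tendsto 0
      simp only [zero_mul, add_zero] at h
      exact h.mono_left nhdsWithin_le_nhds
    refine ge_of_tendsto hlim ?_
    filter_upwards [Ioc_mem_nhdsGT (zero_lt_one (α := ℝ))] with t ht
    exact key t ht.1 ht.2
  -- the conjugate at `(v - p)/ρ`
  have hup : fstar (ρ⁻¹ • (v - p)) ≤ ((⟪p, v - p⟫ - a : ℝ) : EReal) := by
    rw [hfstar]
    refine iSup_le fun x => ?_
    by_cases hx : f x = ⊤
    · rw [hx, EReal.sub_top]; exact bot_le
    obtain ⟨c, hc⟩ : ∃ c : ℝ, f x = (c : EReal) :=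
      ⟨(f x).toReal, (EReal.coe_toReal hx (hnobot _)).symm⟩
    have h := hsub (ρ⁻¹ • x) c (by rw [smul_inv_smul₀ hρ, hc])
    rw [hc, ← EReal.coe_sub, EReal.coe_le_coe_iff]
    rw [inner_sub_right, real_inner_smul_right] at h
    rw [real_inner_smul_right, real_inner_comm, real_inner_comm (v - p) p]
    linarith
  have hlow : ((⟪p, q⟫ - a : ℝ) : EReal) ≤ fstar (ρ⁻¹ • q) := by
    rw [hfstar]
    refine le_trans (le_of_eq ?_) (le_iSup _ (ρ • p))
    rw [ha, ← EReal.coe_sub, real_inner_smul_left, real_inner_smul_right,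
      mul_inv_cancel_left₀ hρ]
  have h := ((add_le_add_left hlow _).trans (hq (v - p))).trans (add_le_add_left hup _)
  rw [← EReal.coe_add, ← EReal.coe_add, EReal.coe_le_coe_iff] at h
  have e1 : v - p - v = -p := by abel
  have e2 : q - v = (p + q - v) - p := by abel
  have e3 : ⟪p, q⟫ = ⟪p, p + q - v⟫ + ⟪p, v - p⟫ := by
    rw [← inner_add_right]; congr 1; abel
  rw [e1, e2, e3, norm_neg, norm_sub_sq_real, real_inner_comm (p + q - v) p] at h
  have h0 : ‖p + q - v‖ ^ 2 ≤ 0 := by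
    have := real_inner_comm p (p + q - v)
    linarith
  have h1 : ‖p + q - v‖ = 0 := by
    have := sq_nonneg ‖p + q - v‖
    exact pow_eq_zero_iff (two_ne_zero) |>.mp (le_antisymm h0 this)
  exact sub_eq_zero.mp (norm_eq_zero.mp h1)
end

section
/- Let H be a real Hilbert space, f : H → ℝ ∪ {+∞} a proper convex lower semicontinuous function with Fenchel conjugate f*, and S : H → H a continuous linear bijection with continuous inverse and adjoint S*. Let p be the unique minimizer of z ↦ f(S z) + (1/2)‖z − v‖² and q the unique minimizer of z ↦ f*((S*)⁻¹ z) + (1/2)‖z − v‖². Then p + q = v (the operator-parameter Moreau decomposition v = Prox_{fS}(v) + Prox_{f*(S*)⁻¹}(v)). -/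
open scoped RealInnerProductSpace

/-- operator-parameter Moreau decomposition
`v = Prox_{fS}(v) + Prox_{f*(S*)⁻¹}(v)`. Here `f : H → ℝ ∪ {+∞}` is CCP with Fenchel
conjugate `f*`, `S : H ≃L[ℝ] H` with adjoint `S*`, and `T = (S*)⁻¹` (two-sided inverse of
the adjoint). `p` is the (unique) minimizer of `z ↦ f(S z) + (1/2)‖z − v‖²` and `q` the
(unique) minimizer of `z ↦ f*((S*)⁻¹ z) + (1/2)‖z − v‖²`; then `p + q = v`. -/
theorem stmt_8 {H : Type*} [NormedAddCommGroup H] [InnerProductSpace ℝ H] [CompleteSpace H]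
    (f : H → EReal)
    (hconv : ∀ x y : H, ∀ t : ℝ, 0 ≤ t → t ≤ 1 →
      f (t • x + (1 - t) • y) ≤ ((t : ℝ) : EReal) * f x + (((1 - t : ℝ)) : EReal) * f y)
    (hlsc : LowerSemicontinuous f)
    (hproper : ∃ x, f x ≠ ⊤) (hnobot : ∀ x, f x ≠ ⊥)
    (fstar : H → EReal)
    (hfstar : ∀ y : H, fstar y = ⨆ x : H, ((⟪x, y⟫ : ℝ) : EReal) - f x)
    (S : H ≃L[ℝ] H) (T : H →L[ℝ] H)
    (hT : ∀ z : H, ContinuousLinearMap.adjoint (S : H →L[ℝ] H) (T z) = z ∧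
        T (ContinuousLinearMap.adjoint (S : H →L[ℝ] H) z) = z)
    (v : H) (p q : H)
    (hp : ∀ z : H, f (S p) + (((1 : ℝ) / 2 * ‖p - v‖ ^ 2 : ℝ) : EReal) ≤
        f (S z) + (((1 : ℝ) / 2 * ‖z - v‖ ^ 2 : ℝ) : EReal))
    (hq : ∀ z : H, fstar (T q) + (((1 : ℝ) / 2 * ‖q - v‖ ^ 2 : ℝ) : EReal) ≤
        fstar (T z) + (((1 : ℝ) / 2 * ‖z - v‖ ^ 2 : ℝ) : EReal)) :
    p + q = v := by
  obtain ⟨x0, hx0⟩ := hproper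
  have hfin : f (S p) ≠ ⊤ := by
    intro h
    have h1 := hp (S.symm x0)
    rw [h, S.apply_symm_apply] at h1
    lift f x0 to ℝ using ⟨hx0, hnobot x0⟩ with a
    rw [EReal.top_add_coe, ← EReal.coe_add, top_le_iff] at h1
    exact EReal.coe_ne_top _ h1
  obtain ⟨b, hb⟩ : ∃ b : ℝ, f (S p) = b :=
    ⟨(f (S p)).toReal, (EReal.coe_toReal hfin (hnobot _)).symm⟩
  have key : ∀ z : H, ∀ a : ℝ, f (S z) = a → 0 ≤ a - b + ⟪p - v, z - p⟫ := by
    intro z a ha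
    have main : ∀ t : ℝ, 0 < t → t ≤ 1 →
        0 ≤ (a - b + ⟪p - v, z - p⟫) + t * ‖z - p‖ ^ 2 / 2 := by
      intro t ht ht1
      have h1 := hconv (S z) (S p) t ht.le ht1
      have h2 := hp (t • z + (1 - t) • p)
      have e1 : S (t • z + (1 - t) • p) = t • S z + (1 - t) • S p := by
        simp
      rw [e1] at h2
      have h3 := h2.trans (add_le_add_left h1 _)
      rw [ha, hb] at h3
      have e2 : t • z + (1 - t) • p - v = (p - v) + t • (z - p) := by module
      rw [e2] at h3
      have h4 : b + 1 / 2 * ‖p - v‖ ^ 2 ≤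
          t * a + (1 - t) * b + 1 / 2 * ‖(p - v) + t • (z - p)‖ ^ 2 := by
        exact_mod_cast h3
      rw [norm_add_sq_real, inner_smul_right, norm_smul, mul_pow, Real.norm_eq_abs, sq_abs] at h4
      have h5 : 0 ≤ t * ((a - b + ⟪p - v, z - p⟫) + t * ‖z - p‖ ^ 2 / 2) := by
        nlinarith
      exact nonneg_of_mul_nonneg_right h5 ht
    by_contra hc
    push Not at hc
    set c := a - b + ⟪p - v, z - p⟫ with hcdef
    have hN : 0 ≤ ‖z - p‖ ^ 2 := sq_nonneg _
    have hpos : 0 < ‖z - p‖ ^ 2 - c := by linarith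
    have ht : 0 < -c / (‖z - p‖ ^ 2 - c) := div_pos (by linarith) hpos
    have h := main _ ht ((div_le_one hpos).2 (by linarith))
    have e : -c / (‖z - p‖ ^ 2 - c) * (‖z - p‖ ^ 2 - c) = -c := div_mul_cancel₀ _ hpos.ne'
    nlinarith
  have hin : ∀ x z : H, ⟪S x, T z⟫ = ⟪x, z⟫ := by
    intro x z
    have h := ContinuousLinearMap.adjoint_inner_right (S : H →L[ℝ] H) x (T z)
    rw [(hT z).1] at h
    exact h.symm
  have hub : fstar (T (v - p)) ≤ ((⟪p, v - p⟫ - b : ℝ) : EReal) := by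
    rw [hfstar]
    refine iSup_le fun x => ?_
    obtain ⟨z, rfl⟩ := S.surjective x
    rw [hin]
    by_cases hz : f (S z) = ⊤
    · rw [hz]; simp
    · have ha : f (S z) = ((f (S z)).toReal : EReal) := (EReal.coe_toReal hz (hnobot _)).symm
      have hk := key z _ ha
      rw [ha]
      rw [← EReal.coe_sub, EReal.coe_le_coe_iff]
      have e : ⟪p - v, z - p⟫ = ⟪p, v - p⟫ - ⟪z, v - p⟫ := by
        rw [← inner_sub_left, real_inner_comm, ← neg_sub z p, ← neg_sub p v, inner_neg_neg]
      linarith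
  have hlb : ((⟪p, q⟫ - b : ℝ) : EReal) ≤ fstar (T q) := by
    rw [hfstar]
    refine le_trans ?_ (le_iSup _ (S p))
    rw [hin, hb, EReal.coe_sub]
  have h := ((add_le_add_left hlb _).trans (hq (v - p))).trans (add_le_add_left hub _)
  have h' : ⟪p, q⟫ - b + 1 / 2 * ‖q - v‖ ^ 2 ≤ ⟪p, v - p⟫ - b + 1 / 2 * ‖v - p - v‖ ^ 2 := by
    exact_mod_cast h
  have e1 : v - p - v = -p := by abel
  rw [e1, norm_neg, inner_sub_right, real_inner_self_eq_norm_sq] at h'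
  have e2 := norm_add_sq_real p (q - v)
  rw [inner_sub_right] at e2
  have h0 : ‖p + (q - v)‖ ^ 2 = 0 := le_antisymm (by linarith) (sq_nonneg _)
  have h1 : p + (q - v) = 0 := by simpa using h0
  rw [← add_sub_assoc] at h1
  exact sub_eq_zero.1 h1
end

section
/- Let T : ℝⁿ → ℝⁿ be θ-averaged with θ ∈ (0,1), i.e. T = (1−θ)I + θN for some nonexpansive N, and assume Fix T := {ζ : T(ζ) = ζ} is nonempty. For any starting point ζ⁰, define ζ^{k+1} = T(ζ^k). Then for every k ≥ 0 and every fixed point ζ⋆ ∈ Fix T: ‖ζ^{k+1} − ζ^k‖² ≤ (θ / ((k+1)(1−θ))) · ‖ζ⁰ − ζ⋆‖²; in particular ‖ζ^{k+1} − ζ^k‖² ≤ (θ / ((k+1)(1−θ))) · dist²(ζ⁰, Fix T). -/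
open Metric

/-- worst-case rate for a `θ`-averaged map `T = (1−θ)I + θN` on `ℝⁿ`
(with `N` nonexpansive and `Fix T ≠ ∅`): for the iteration `ζ^{k+1} = T(ζ^k)` and every
`k` and every fixed point `ζ⋆`,
`‖ζ^{k+1} − ζ^k‖² ≤ (θ/((k+1)(1−θ)))‖ζ⁰ − ζ⋆‖²`, and in particular
`‖ζ^{k+1} − ζ^k‖² ≤ (θ/((k+1)(1−θ))) dist²(ζ⁰, Fix T)`. -/
theorem stmt_12 {n : ℕ} (T N : EuclideanSpace ℝ (Fin n) → EuclideanSpace ℝ (Fin n))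
    (θ : ℝ) (hθ0 : 0 < θ) (hθ1 : θ < 1)
    (hN : ∀ u v, ‖N u - N v‖ ≤ ‖u - v‖)
    (hT : ∀ x, T x = (1 - θ) • x + θ • N x)
    (hfix : ∃ x, T x = x)
    (ζ : ℕ → EuclideanSpace ℝ (Fin n)) (hζ : ∀ k, ζ (k + 1) = T (ζ k)) :
    ∀ k : ℕ,
      (∀ ζs, T ζs = ζs →
        ‖ζ (k + 1) - ζ k‖ ^ 2 ≤ θ / (((k : ℝ) + 1) * (1 - θ)) * ‖ζ 0 - ζs‖ ^ 2) ∧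
      ‖ζ (k + 1) - ζ k‖ ^ 2 ≤
        θ / (((k : ℝ) + 1) * (1 - θ)) * (infDist (ζ 0) {x | T x = x}) ^ 2 := by
  have hTn : ∀ u v, ‖T u - T v‖ ≤ ‖u - v‖ := by
    intro u v
    have e : T u - T v = (1 - θ) • (u - v) + θ • (N u - N v) := by
      rw [hT, hT]; module
    rw [e]
    refine (norm_add_le _ _).trans ?_
    rw [norm_smul, norm_smul, Real.norm_of_nonneg (by linarith), Real.norm_of_nonneg hθ0.le]
    nlinarith [hN u v]
  have key : ∀ x s, T s = s →
      (1 - θ) * ‖T x - x‖ ^ 2 + θ * ‖T x - s‖ ^ 2 ≤ θ * ‖x - s‖ ^ 2 := by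
    intro x s hs
    have hNs : N s = s := by
      have h1 : θ • (N s - s) = 0 := by
        have h2 := hT s
        rw [hs] at h2
        have h3 : θ • (N s - s) = ((1 - θ) • s + θ • N s) - s := by module
        rw [h3, ← h2, sub_self]
      rcases smul_eq_zero.mp h1 with h | h
      · linarith
      · exact sub_eq_zero.mp h
    have e1 : T x - x = θ • ((N x - s) - (x - s)) := by rw [hT]; module
    have e2 : T x - s = (1 - θ) • (x - s) + θ • (N x - s) := by rw [hT]; module
    have hn : ‖N x - s‖ ≤ ‖x - s‖ := by
      have := hN x s
      rwa [hNs] at this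
    have hn2 : ‖N x - s‖ ^ 2 ≤ ‖x - s‖ ^ 2 := by gcongr
    rw [e1, e2, norm_smul, mul_pow, norm_sub_sq_real, norm_add_sq_real, norm_smul, norm_smul,
      real_inner_smul_left, real_inner_smul_right, Real.norm_of_nonneg hθ0.le,
      Real.norm_of_nonneg (by linarith : (0:ℝ) ≤ 1 - θ), real_inner_comm]
    have h := mul_le_mul_of_nonneg_left hn2 (mul_pos hθ0 hθ0).le
    linear_combination h
  have main : ∀ s, T s = s → ∀ k : ℕ,
      (1 - θ) * ((k : ℝ) + 1) * ‖ζ (k + 1) - ζ k‖ ^ 2 + θ * ‖ζ (k + 1) - s‖ ^ 2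
        ≤ θ * ‖ζ 0 - s‖ ^ 2 := by
    intro s hs k
    induction k with
    | zero =>
      have := key (ζ 0) s hs
      rw [hζ]
      simpa using this
    | succ k ih =>
      have h1 := key (ζ (k + 1)) s hs
      rw [← hζ] at h1
      have h2 : ‖ζ (k + 1 + 1) - ζ (k + 1)‖ ≤ ‖ζ (k + 1) - ζ k‖ := by
        have := hTn (ζ (k + 1)) (ζ k)
        rwa [← hζ, ← hζ] at this
      have h3 : ‖ζ (k + 1 + 1) - ζ (k + 1)‖ ^ 2 ≤ ‖ζ (k + 1) - ζ k‖ ^ 2 := by gcongr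
      have h4 : 0 ≤ (1 - θ) * ((k : ℝ) + 1) := mul_nonneg (by linarith) (by positivity)
      have h5 := mul_le_mul_of_nonneg_left h3 h4
      push_cast
      linarith
  intro k
  have first : ∀ ζs, T ζs = ζs →
      ‖ζ (k + 1) - ζ k‖ ^ 2 ≤ θ / (((k : ℝ) + 1) * (1 - θ)) * ‖ζ 0 - ζs‖ ^ 2 := by
    intro s hs
    have h := main s hs k
    have hp : 0 < ((k : ℝ) + 1) * (1 - θ) := mul_pos (by positivity) (by linarith)
    rw [div_mul_eq_mul_div, le_div_iff₀ hp]
    have : 0 ≤ θ * ‖ζ (k + 1) - s‖ ^ 2 := by positivity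
    linarith
  refine ⟨first, ?_⟩
  have hc : Continuous T := by
    refine (LipschitzWith.of_dist_le_mul (K := 1) fun u v => ?_).continuous
    simpa [dist_eq_norm] using hTn u v
  have hcl : IsClosed {x | T x = x} := isClosed_eq hc continuous_id
  obtain ⟨s, hs, hd⟩ := hcl.exists_infDist_eq_dist hfix (ζ 0)
  rw [hd, dist_eq_norm]
  exact first s hs
end
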